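/- Assume θ < -1, and b ≥ 0, c ≥ 0 on Ω. Let Ψ ∈ C²(Ω) ∩ C¹(cl(Ω)) be a classical solution of (★) with Ψ ≥ 0 on cl(Ω) and with boundary data g satisfying g > 0 on ∂Ω. Set ν := (sup_{∂Ω} g)^{-(1+θ)} > 0. Let Ψ̲ ∈ C²(Ω) ∩ C¹(cl(Ω)) satisfy the linear equation -∇·(a∇Ψ̲) + (b + cν)Ψ̲ = 0 pointwise in Ω with Ψ̲ = g on ∂Ω, and suppose 0 ≤ Ψ̲ ≤ sup_{∂Ω} g on cl(Ω). Then Ψ ≥ Ψ̲ everywhere in Ω. -/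

import Mathlib

/-!
The comparison is a weak maximum principle for `w = Ψlow - Ψ`, which vanishes on `∂Ω`.
Where `w > 0` one has `0 ≤ Ψ < Ψlow ≤ gbar`, hence `Ψ ^ (-θ) ≤ ν Ψ ≤ ν Ψlow`
(`sTheta_le_mul`), and the two equations give `∇·(a∇w) ≥ 0` there.

Since this inequality is not strict, `w` is perturbed by `ε h` with `h y = exp (γ y₀)`. By
`divA_exp`, `∇·(a∇h) = γ h (γ a + ∂₀a)`, which is positive once `γ a₀` exceeds the supremum of
`|∂₀a|` over the compact set `closure Ω`. If `w` were positive somewhere, then for small `ε` the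
function `w + ε h` would attain its maximum over `closure Ω` at an interior point with `w > 0`,
where its divergence would be both positive and, by `divA_nonpos_of_isLocalMax`, nonpositive.
-/

open Real Set MeasureTheory Filter Topology

/-- Divergence-form operator `∇·(a∇u)(x) = ∑ i ∂_i (a ∂_i u)(x)`. -/
noncomputable def divA {d : ℕ} (a u : EuclideanSpace ℝ (Fin d) → ℝ)
    (x : EuclideanSpace ℝ (Fin d)) : ℝ :=
  ∑ i : Fin d,
    fderiv ℝ (fun y => a y * fderiv ℝ u y (EuclideanSpace.single i (1 : ℝ))) x
      (EuclideanSpace.single i (1 : ℝ))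

/-- Squared Euclidean norm of the gradient `|∇u|²(x)`. -/
noncomputable def gradSq {d : ℕ} (u : EuclideanSpace ℝ (Fin d) → ℝ)
    (x : EuclideanSpace ℝ (Fin d)) : ℝ :=
  ∑ i : Fin d, (fderiv ℝ u x (EuclideanSpace.single i (1 : ℝ))) ^ 2


/-- `s_θ(z) = sign(z)·|z|^{-θ}`, so `s_θ(z) = z^{-θ}` for `z > 0` and `s_θ(0) = 0`. -/
noncomputable def sTheta (θ z : ℝ) : ℝ := Real.sign z * |z| ^ (-θ)

section Helpers

variable {d : ℕ}

lemma differentiableAt_flux {Ω : Set (EuclideanSpace ℝ (Fin d))} (hΩ : IsOpen Ω)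
    {a u : EuclideanSpace ℝ (Fin d) → ℝ} (ha : ContDiffOn ℝ 1 a Ω) (hu : ContDiffOn ℝ 2 u Ω)
    {x : EuclideanSpace ℝ (Fin d)} (hx : x ∈ Ω) (e : EuclideanSpace ℝ (Fin d)) :
    DifferentiableAt ℝ (fun y => a y * fderiv ℝ u y e) x := by
  have h1 : DifferentiableAt ℝ a x :=
    (ha.contDiffAt (hΩ.mem_nhds hx)).differentiableAt (by norm_num)
  have h2 : ContDiffAt ℝ 1 (fderiv ℝ u) x :=
    (hu.contDiffAt (hΩ.mem_nhds hx)).fderiv_right (by norm_num)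
  exact h1.mul ((h2.differentiableAt (by norm_num)).clm_apply (differentiableAt_const e))

lemma divA_sub_add_const_mul {Ω : Set (EuclideanSpace ℝ (Fin d))} (hΩ : IsOpen Ω)
    {a u v h : EuclideanSpace ℝ (Fin d) → ℝ} (ha : ContDiffOn ℝ 1 a Ω)
    (hu : ContDiffOn ℝ 2 u Ω) (hv : ContDiffOn ℝ 2 v Ω) (hh : ContDiffOn ℝ 2 h Ω) (ε : ℝ)
    {x : EuclideanSpace ℝ (Fin d)} (hx : x ∈ Ω) :
    divA a (fun y => u y - v y + ε * h y) x = divA a u x - divA a v x + ε * divA a h x := by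
  unfold divA
  rw [Finset.mul_sum, ← Finset.sum_sub_distrib, ← Finset.sum_add_distrib]
  refine Finset.sum_congr rfl fun i _ => ?_
  set e := EuclideanSpace.single i (1 : ℝ)
  have hev : (fun y => a y * fderiv ℝ (fun y => u y - v y + ε * h y) y e) =ᶠ[𝓝 x]
      fun y => a y * fderiv ℝ u y e - a y * fderiv ℝ v y e + ε * (a y * fderiv ℝ h y e) := by
    filter_upwards [hΩ.mem_nhds hx] with y hy
    have du := ((hu.contDiffAt (hΩ.mem_nhds hy)).differentiableAt (by norm_num)).hasFDerivAt
    have dv := ((hv.contDiffAt (hΩ.mem_nhds hy)).differentiableAt (by norm_num)).hasFDerivAt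
    have dh := ((hh.contDiffAt (hΩ.mem_nhds hy)).differentiableAt (by norm_num)).hasFDerivAt
    have key := ((du.fun_sub dv).fun_add (dh.const_mul ε)).fderiv
    rw [key]
    simp
    ring
  rw [hev.fderiv_eq]
  have du := (differentiableAt_flux hΩ ha hu hx e).hasFDerivAt
  have dv := (differentiableAt_flux hΩ ha hv hx e).hasFDerivAt
  have dh := (differentiableAt_flux hΩ ha hh hx e).hasFDerivAt
  have key := ((du.fun_sub dv).fun_add (dh.const_mul ε)).fderiv
  rw [key]
  simp

/-- At an interior local maximum, each term `∂ᵢ(a ∂ᵢ u)` is nonpositive: the flux `a ∂ᵢ u` vanishes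
there, so a positive derivative would make `u` strictly increasing in direction `eᵢ`. -/
lemma divA_nonpos_of_isLocalMax {Ω : Set (EuclideanSpace ℝ (Fin d))} (hΩ : IsOpen Ω)
    {a u : EuclideanSpace ℝ (Fin d) → ℝ} (ha : ContDiffOn ℝ 1 a Ω) (hu : ContDiffOn ℝ 2 u Ω)
    (hpos : ∀ x ∈ Ω, 0 < a x) {x : EuclideanSpace ℝ (Fin d)} (hx : x ∈ Ω)
    (hmax : IsLocalMax u x) : divA a u x ≤ 0 := by
  unfold divA
  refine Finset.sum_nonpos fun i _ => ?_
  set e := EuclideanSpace.single i (1 : ℝ)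
  by_contra! hlt
  have hline : ∀ t : ℝ, HasDerivAt (fun t : ℝ => x + t • e) e t := fun t => by
    simpa using ((hasDerivAt_id t).smul_const e).const_add x
  have hcont : Tendsto (fun t : ℝ => x + t • e) (𝓝 0) (𝓝 x) := by
    simpa using (hline 0).continuousAt.tendsto
  have hq : HasDerivAt (fun t : ℝ => a (x + t • e) * fderiv ℝ u (x + t • e) e)
      (fderiv ℝ (fun y => a y * fderiv ℝ u y e) x e) 0 := by
    have h1 : HasFDerivAt (fun y => a y * fderiv ℝ u y e)
        (fderiv ℝ (fun y => a y * fderiv ℝ u y e) x) (x + (0 : ℝ) • e) := by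
      simpa using (differentiableAt_flux hΩ ha hu hx e).hasFDerivAt
    exact h1.comp_hasDerivAt (0 : ℝ) (hline 0)
  have hq0 : a (x + (0 : ℝ) • e) * fderiv ℝ u (x + (0 : ℝ) • e) e = 0 := by
    simp [hmax.fderiv_eq_zero]
  have hslope := (hasDerivAt_iff_tendsto_slope.1 hq).eventually (lt_mem_nhds hlt)
  rw [eventually_nhdsWithin_iff] at hslope
  obtain ⟨δ, hδ, H⟩ := Metric.eventually_nhds_iff.1
    (hslope.and ((hcont.eventually (hΩ.mem_nhds hx)).and (hcont.eventually hmax)))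
  have hmem : ∀ t ∈ Icc 0 (δ / 2), dist t 0 < δ := fun t ht => by
    rw [Real.dist_eq, sub_zero, abs_of_nonneg ht.1]
    linarith [ht.2]
  have hder : ∀ t ∈ Icc 0 (δ / 2),
      HasDerivAt (fun t : ℝ => u (x + t • e)) (fderiv ℝ u (x + t • e) e) t := fun t ht => by
    have hm : x + t • e ∈ Ω := (H (hmem t ht)).2.1
    exact ((hu.contDiffAt (hΩ.mem_nhds hm)).differentiableAt
      (by norm_num)).hasFDerivAt.comp_hasDerivAt t (hline t)
  have hmono : StrictMonoOn (fun t : ℝ => u (x + t • e)) (Icc 0 (δ / 2)) := by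
    refine strictMonoOn_of_deriv_pos (convex_Icc _ _)
      (fun t ht => (hder t ht).continuousAt.continuousWithinAt) fun t ht => ?_
    rw [interior_Icc] at ht
    have ht' := Ioo_subset_Icc_self ht
    rw [(hder t ht').deriv]
    obtain ⟨h1, h2, -⟩ := H (hmem t ht')
    have h3 := h1 ht.1.ne'
    rw [slope_def_field, hq0, sub_zero, sub_zero] at h3
    have h4 := (div_pos_iff_of_pos_right ht.1).1 h3
    exact (mul_pos_iff_of_pos_left (hpos _ h2)).1 h4
  have h1 := hmono (left_mem_Icc.2 (by positivity)) (right_mem_Icc.2 (by positivity))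
    (show (0 : ℝ) < δ / 2 by positivity)
  have h2 := (H (hmem (δ / 2) (right_mem_Icc.2 (by positivity)))).2.2
  simp only [zero_smul, add_zero] at h1
  exact absurd h1 (not_lt.2 h2)

lemma hasFDerivAt_exp_coord (j : Fin d) (γ : ℝ) (x : EuclideanSpace ℝ (Fin d)) :
    HasFDerivAt (fun y : EuclideanSpace ℝ (Fin d) => Real.exp (γ * y j))
      (Real.exp (γ * x j) • γ • (EuclideanSpace.proj j : EuclideanSpace ℝ (Fin d) →L[ℝ] ℝ)) x :=
  ((EuclideanSpace.proj j : EuclideanSpace ℝ (Fin d) →L[ℝ] ℝ).hasFDerivAt.const_mul γ).exp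

lemma divA_exp {a : EuclideanSpace ℝ (Fin d) → ℝ} (j : Fin d) (γ : ℝ)
    {x : EuclideanSpace ℝ (Fin d)} (ha : DifferentiableAt ℝ a x) :
    divA a (fun y => Real.exp (γ * y j)) x =
      γ * Real.exp (γ * x j) * (γ * a x + fderiv ℝ a x (EuclideanSpace.single j (1 : ℝ))) := by
  unfold divA
  rw [Finset.sum_eq_single j]
  · have h1 : (fun y : EuclideanSpace ℝ (Fin d) => a y *
        fderiv ℝ (fun y : EuclideanSpace ℝ (Fin d) => Real.exp (γ * y j)) y
          (EuclideanSpace.single j (1 : ℝ))) =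
        fun y => a y * (γ * Real.exp (γ * y j)) := by
      funext y
      rw [(hasFDerivAt_exp_coord j γ y).fderiv]
      simp [mul_comm]
    rw [h1, (ha.hasFDerivAt.fun_mul ((hasFDerivAt_exp_coord j γ x).const_mul γ)).fderiv]
    simp
    ring
  · intro i _ hij
    have h1 : (fun y : EuclideanSpace ℝ (Fin d) => a y *
        fderiv ℝ (fun y : EuclideanSpace ℝ (Fin d) => Real.exp (γ * y j)) y
          (EuclideanSpace.single i (1 : ℝ))) = fun _ => (0 : ℝ) := by
      funext y
      rw [(hasFDerivAt_exp_coord j γ y).fderiv]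
      simp [hij.symm]
    rw [h1]
    simp
  · simp

lemma sTheta_le_mul {θ z G : ℝ} (hθ : θ < -1) (hz : 0 ≤ z) (hzG : z ≤ G) :
    sTheta θ z ≤ G ^ (-(1 + θ)) * z := by
  unfold sTheta
  rcases hz.eq_or_lt with rfl | hz
  · simp
  · rw [Real.sign_of_pos hz, abs_of_pos hz, one_mul,
      show -θ = -(1 + θ) + 1 by ring, Real.rpow_add_one hz.ne']
    gcongr
    linarith

end Helpers

theorem stmt7 {d : ℕ} (hd : 1 ≤ d) (Ω U : Set (EuclideanSpace ℝ (Fin d)))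
    (hΩo : IsOpen Ω) (hΩb : Bornology.IsBounded Ω)
    (hU : IsOpen U) (hUΩ : closure Ω ⊆ U)
    (a b c : EuclideanSpace ℝ (Fin d) → ℝ)
    (ha : ContDiffOn ℝ 1 a U) (a₀ : ℝ) (ha₀ : 0 < a₀) (halb : ∀ x ∈ Ω, a₀ ≤ a x)
    (hbcont : ContinuousOn b (closure Ω)) (hccont : ContinuousOn c (closure Ω))
    (θ : ℝ) (hθ : θ < -1)
    (hbnn : ∀ x ∈ Ω, 0 ≤ b x) (hcnn : ∀ x ∈ Ω, 0 ≤ c x)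
    (g : EuclideanSpace ℝ (Fin d) → ℝ) (hg : ∀ x ∈ frontier Ω, 0 < g x)
    (gbar : ℝ) (hgbar : IsLUB (g '' frontier Ω) gbar) (hgbarpos : 0 < gbar)
    (ν : ℝ) (hν : ν = gbar ^ (-(1 + θ)))
    (Ψ : EuclideanSpace ℝ (Fin d) → ℝ)
    (hΨ2 : ContDiffOn ℝ 2 Ψ Ω) (hΨ1 : ContDiffOn ℝ 1 Ψ (closure Ω))
    (hΨnn : ∀ x ∈ closure Ω, 0 ≤ Ψ x)
    (hΨeq : ∀ x ∈ Ω, divA a Ψ x = b x * Ψ x + c x * sTheta θ (Ψ x))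
    (hΨbd : ∀ x ∈ frontier Ω, Ψ x = g x)
    (Ψlow : EuclideanSpace ℝ (Fin d) → ℝ)
    (hΨl2 : ContDiffOn ℝ 2 Ψlow Ω) (hΨl1 : ContDiffOn ℝ 1 Ψlow (closure Ω))
    (hΨleq : ∀ x ∈ Ω, -divA a Ψlow x + (b x + c x * ν) * Ψlow x = 0)
    (hΨlbd : ∀ x ∈ frontier Ω, Ψlow x = g x)
    (hΨlbounds : ∀ x ∈ closure Ω, 0 ≤ Ψlow x ∧ Ψlow x ≤ gbar) :
    ∀ x ∈ Ω, Ψlow x ≤ Ψ x := by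
  intro x₀ hx₀
  by_contra! hlt
  have hΩU : Ω ⊆ U := subset_closure.trans hUΩ
  have haΩ : ContDiffOn ℝ 1 a Ω := ha.mono hΩU
  have hK : IsCompact (closure Ω) := hΩb.isCompact_closure
  let j : Fin d := ⟨0, hd⟩
  obtain ⟨C, hC⟩ := hK.exists_bound_of_continuousOn
    (f := fun y => fderiv ℝ a y (EuclideanSpace.single j (1 : ℝ)))
    (((ha.continuousOn_fderiv_of_isOpen hU le_rfl).mono hUΩ).clm_apply continuousOn_const)
  have hC0 : 0 ≤ C := (norm_nonneg _).trans (hC x₀ (subset_closure hx₀))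
  -- With this `γ`, `γ a + ∂₀a ≥ (C + 1) - C > 0` on `Ω`.
  let γ : ℝ := (C + 1) / a₀
  have hγ : 0 < γ := by positivity
  let h : EuclideanSpace ℝ (Fin d) → ℝ := fun y => Real.exp (γ * y j)
  have hh : ContDiff ℝ 2 h := by
    have : ContDiff ℝ 2 fun y : EuclideanSpace ℝ (Fin d) => y j :=
      (EuclideanSpace.proj j : EuclideanSpace ℝ (Fin d) →L[ℝ] ℝ).contDiff
    exact (contDiff_const.mul this).exp
  have hLh : ∀ x ∈ Ω, 0 < divA a h x := fun x hx => by
    have hda : DifferentiableAt ℝ a x :=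
      (haΩ.contDiffAt (hΩo.mem_nhds hx)).differentiableAt (by norm_num)
    have h1 := (abs_le.1 (hC x (subset_closure hx))).1
    have h2 : C + 1 ≤ γ * a x := by
      calc C + 1 = γ * a₀ := by simp only [γ]; field_simp
        _ ≤ γ * a x := by gcongr; exact halb x hx
    have h3 : divA a h x = _ := divA_exp j γ hda
    rw [h3]
    exact mul_pos (by positivity) (by linarith)
  obtain ⟨M, hM⟩ := hK.exists_bound_of_continuousOn hh.continuous.continuousOn
  have hM0 : 0 ≤ M := (norm_nonneg _).trans (hM x₀ (subset_closure hx₀))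
  have hw0 : 0 < Ψlow x₀ - Ψ x₀ := sub_pos.2 hlt
  -- Chosen so that `ε h < w x₀` on `closure Ω`.
  let ε : ℝ := (Ψlow x₀ - Ψ x₀) / (M + 1)
  have hε : 0 < ε := by positivity
  obtain ⟨x, hxK, hxmax⟩ := hK.exists_isMaxOn ⟨x₀, subset_closure hx₀⟩
    (f := fun y => Ψlow y - Ψ y + ε * h y)
    ((hΨl1.continuousOn.sub hΨ1.continuousOn).add
      (continuousOn_const.mul hh.continuous.continuousOn))
  have hwx : Ψ x < Ψlow x := by
    have h1 : Ψlow x₀ - Ψ x₀ + ε * h x₀ ≤ Ψlow x - Ψ x + ε * h x :=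
      hxmax (subset_closure hx₀)
    have h2 : 0 < ε * h x₀ := mul_pos hε (Real.exp_pos _)
    have h3 : ε * h x ≤ ε * (M + 1) := by
      have := (abs_le.1 (hM x hxK)).2
      gcongr
      linarith
    have h4 : ε * (M + 1) = Ψlow x₀ - Ψ x₀ := by simp only [ε]; field_simp
    linarith
  have hxΩ : x ∈ Ω := by
    by_contra hn
    have hfr : x ∈ frontier Ω := by
      rw [hΩo.frontier_eq]
      exact ⟨hxK, hn⟩
    rw [hΨbd x hfr, hΨlbd x hfr] at hwx
    exact lt_irrefl _ hwx
  have hloc : IsLocalMax (fun y => Ψlow y - Ψ y + ε * h y) x :=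
    hxmax.isLocalMax (Filter.mem_of_superset (hΩo.mem_nhds hxΩ) subset_closure)
  have hle := divA_nonpos_of_isLocalMax hΩo haΩ
    ((hΨl2.sub hΨ2).add (contDiffOn_const.mul hh.contDiffOn))
    (fun y hy => ha₀.trans_le (halb y hy)) hxΩ hloc
  have hsplit := divA_sub_add_const_mul hΩo haΩ hΨl2 hΨ2 hh.contDiffOn ε hxΩ
  have hsub : divA a Ψ x ≤ divA a Ψlow x := by
    have h1 := hΨleq x hxΩ
    have h2 : sTheta θ (Ψ x) ≤ ν * Ψlow x := by
      have hs := sTheta_le_mul hθ (hΨnn x hxK) (hwx.le.trans (hΨlbounds x hxK).2)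
      rw [← hν] at hs
      have hν0 : 0 ≤ ν := by rw [hν]; positivity
      exact hs.trans (mul_le_mul_of_nonneg_left hwx.le hν0)
    have h3 := mul_le_mul_of_nonneg_left h2 (hcnn x hxΩ)
    have h4 := mul_le_mul_of_nonneg_left hwx.le (hbnn x hxΩ)
    rw [hΨeq x hxΩ]
    linarith
  have hpos := mul_pos hε (hLh x hxΩ)
  have hle' := hsplit.symm.le.trans hle
  linarith
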